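/- arXiv:1908.03542 — 5 statements merged into one kernel-verified Lean document; each statement's English description precedes it below -/
import Mathlib

section
/- Let D be a Cantor space equipped with a metric d compatible with its topology, and let C ⊆ D be a proper closed subset which is itself a Cantor space in the subspace topology and is entwined in D (i.e. C has empty interior in D). Suppose C = C₀ ∪ C₁ where C₀, C₁ are disjoint, nonempty, and clopen in C, and let ε > 0. Then there exist subsets D₀, D₁ ⊆ D, clopen in D, such that: (1) Dᵢ ∩ C = Cᵢ for i = 0,1; (2) D₀ ∩ D₁ = ∅; (3) D₀ ∪ D₁ ≠ D; (4) Dᵢ is contained in the open ε-neighborhood of Cᵢ (with respect to d); and (5) each Cᵢ and each Dᵢ is a Cantor space in the subspace topology, Cᵢ is a proper subset of Dᵢ, and Cᵢ has empty interior in Dᵢ. -/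
open Set Metric Filter Topology

/-- A Cantor space: nonempty, compact, metrizable, totally disconnected, perfect
(no isolated points). -/
def IsCantorSpace (X : Type*) [TopologicalSpace X] : Prop :=
  Nonempty X ∧ CompactSpace X ∧ TopologicalSpace.MetrizableSpace X ∧
    TotallyDisconnectedSpace X ∧ ∀ x : X, Filter.NeBot (nhdsWithin x {x}ᶜ)

/-!
In a compact, Hausdorff, totally disconnected space, disjoint closed sets have disjoint clopen
neighbourhoods, contained in any prescribed open ones. As `C` has empty interior, it misses a
point `p`; choosing the prescribed neighbourhoods to avoid `p` leaves `p` outside `D₀ ∪ D₁`. Being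
clopen, `Dᵢ` inherits from `D` that it is a Cantor space, and `Cᵢ` inherits this from `C`. Finally
`Dᵢ` is a nonempty open set and `Cᵢ` has empty interior in `D`, hence `Cᵢ` is entwined in `Dᵢ`.
-/

theorem inf_sup_eq_left_of_le_of_disjoint {α : Type*} [DistribLattice α] [OrderBot α] {a b e : α}
    (hae : a ≤ e) (heb : Disjoint e b) : e ⊓ (a ⊔ b) = a := by
  rw [inf_sup_left, inf_eq_right.mpr hae, heb.eq_bot, sup_bot_eq]

section

variable {X Y : Type*} [TopologicalSpace X] [TopologicalSpace Y]

theorem IsCantorSpace.of_isEmbedding_of_isClopen_range [Nonempty Y] (hX : IsCantorSpace X)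
    {f : Y → X} (hf : IsEmbedding f) (hrange : IsClopen (range f)) : IsCantorSpace Y := by
  obtain ⟨-, _, _, _, hperfect⟩ := hX
  have hopen : IsOpenEmbedding f := ⟨hf, hrange.isOpen⟩
  have hclosed : IsClosedEmbedding f := ⟨hf, hrange.isClosed⟩
  refine ⟨inferInstance, hclosed.compactSpace, hf.metrizableSpace,
    ⟨hf.isTotallyDisconnected (isTotallyDisconnected_of_totallyDisconnectedSpace _)⟩,
    fun y ↦ ⟨fun hy ↦ (hperfect (f y)).ne ?_⟩⟩
  rw [← isOpen_singleton_iff_punctured_nhds] at hy ⊢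
  exact image_singleton ▸ hopen.isOpenMap {y} hy

theorem IsCantorSpace.isClosed_coe [T2Space X] {S : Set X} (hS : IsCantorSpace S) : IsClosed S :=
  (isCompact_iff_compactSpace.mpr hS.2.1).isClosed

theorem IsCantorSpace.coe_of_isClopen (hX : IsCantorSpace X) {S : Set X} (hS : IsClopen S)
    (hne : S.Nonempty) : IsCantorSpace S :=
  have := hne.to_subtype
  hX.of_isEmbedding_of_isClopen_range .subtypeVal (Subtype.range_val.symm ▸ hS)

theorem IsCantorSpace.coe_of_isClopen_preimage_coe {S T : Set X} (hT : IsCantorSpace T)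
    (hST : S ⊆ T) (hne : S.Nonempty) (hS : IsClopen (Subtype.val ⁻¹' S : Set T)) :
    IsCantorSpace S :=
  have := hne.to_subtype
  hT.of_isEmbedding_of_isClopen_range (.inclusion hST) ((range_inclusion hST).symm ▸ hS)

theorem interior_preimage_coe_eq_empty {S U : Set X} (hU : IsOpen U) (hS : interior S = ∅) :
    interior (Subtype.val ⁻¹' S : Set U) = ∅ := by
  rw [← hU.isOpenMap_subtype_val.preimage_interior_eq_interior_preimage continuous_subtype_val,
    hS, preimage_empty]

theorem ssubset_of_isOpen_of_interior_eq_empty {S U : Set X} (hU : IsOpen U) (hne : U.Nonempty)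
    (hSU : S ⊆ U) (hS : interior S = ∅) : S ⊂ U := by
  refine hSU.ssubset_of_ne ?_
  rintro rfl
  exact hne.ne_empty (hU.interior_eq.symm.trans hS)

theorem exists_disjoint_isClopen_of_isClosed [CompactSpace X] [T2Space X]
    [TotallyDisconnectedSpace X] {A B U V : Set X} (hA : IsClosed A) (hB : IsClosed B)
    (hAB : Disjoint A B) (hU : IsOpen U) (hV : IsOpen V) (hAU : A ⊆ U) (hBV : B ⊆ V) :
    ∃ E F : Set X, IsClopen E ∧ IsClopen F ∧ A ⊆ E ∧ B ⊆ F ∧ Disjoint E F ∧ E ⊆ U ∧ F ⊆ V := by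
  obtain ⟨E, hE, hAE, hEU⟩ := exists_clopen_of_closed_subset_open hA
    (hU.inter hB.isOpen_compl) (subset_inter hAU hAB.subset_compl_right)
  have hBE : B ⊆ Eᶜ := subset_compl_comm.mp (hEU.trans inter_subset_right)
  obtain ⟨F, hF, hBF, hFV⟩ := exists_clopen_of_closed_subset_open hB
    (hV.inter hE.isClosed.isOpen_compl) (subset_inter hBV hBE)
  exact ⟨E, F, hE, hF, hAE, hBF, subset_compl_iff_disjoint_left.mp (hFV.trans inter_subset_right),
    hEU.trans inter_subset_left, hFV.trans inter_subset_left⟩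

end

theorem stmt0_general {D : Type*} [TopologicalSpace D] (hD : IsCantorSpace D)
    {C C₀ C₁ U₀ U₁ : Set D} (hC : IsCantorSpace C) (hCint : interior C = ∅)
    (hCunion : C₀ ∪ C₁ = C) (hCdisj : Disjoint C₀ C₁)
    (hC₀ne : C₀.Nonempty) (hC₁ne : C₁.Nonempty)
    (hC₀clopen : IsClopen (Subtype.val ⁻¹' C₀ : Set C))
    (hC₁clopen : IsClopen (Subtype.val ⁻¹' C₁ : Set C))
    (hU₀ : IsOpen U₀) (hU₁ : IsOpen U₁) (hCU₀ : C₀ ⊆ U₀) (hCU₁ : C₁ ⊆ U₁) :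
    ∃ D₀ D₁ : Set D,
      IsClopen D₀ ∧ IsClopen D₁ ∧
      D₀ ∩ C = C₀ ∧ D₁ ∩ C = C₁ ∧
      Disjoint D₀ D₁ ∧
      D₀ ∪ D₁ ≠ univ ∧
      D₀ ⊆ U₀ ∧ D₁ ⊆ U₁ ∧
      IsCantorSpace C₀ ∧ IsCantorSpace C₁ ∧
      IsCantorSpace D₀ ∧ IsCantorSpace D₁ ∧
      C₀ ⊂ D₀ ∧ C₁ ⊂ D₁ ∧
      interior (Subtype.val ⁻¹' C₀ : Set D₀) = ∅ ∧
      interior (Subtype.val ⁻¹' C₁ : Set D₁) = ∅ := by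
  have ⟨_, _, _, _, _⟩ := hD
  have hC₀C : C₀ ⊆ C := hCunion ▸ subset_union_left
  have hC₁C : C₁ ⊆ C := hCunion ▸ subset_union_right
  have hC₀ : IsCantorSpace C₀ := hC.coe_of_isClopen_preimage_coe hC₀C hC₀ne hC₀clopen
  have hC₁ : IsCantorSpace C₁ := hC.coe_of_isClopen_preimage_coe hC₁C hC₁ne hC₁clopen
  have hC₀int : interior C₀ = ∅ := subset_empty_iff.mp (hCint ▸ interior_mono hC₀C)
  have hC₁int : interior C₁ = ∅ := subset_empty_iff.mp (hCint ▸ interior_mono hC₁C)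
  obtain ⟨p, hp⟩ : Cᶜ.Nonempty := (interior_eq_empty_iff_dense_compl.mp hCint).nonempty
  obtain ⟨D₀, D₁, hD₀, hD₁, hCD₀, hCD₁, hdisj, hDU₀, hDU₁⟩ :=
    exists_disjoint_isClopen_of_isClosed hC₀.isClosed_coe hC₁.isClosed_coe hCdisj
      (hU₀.inter isOpen_compl_singleton) (hU₁.inter isOpen_compl_singleton)
      (subset_inter hCU₀ (subset_compl_singleton_iff.mpr fun h ↦ hp (hC₀C h)))
      (subset_inter hCU₁ (subset_compl_singleton_iff.mpr fun h ↦ hp (hC₁C h)))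
  have hpD : p ∉ D₀ ∪ D₁ := by
    rintro (h | h)
    · exact (hDU₀ h).2 rfl
    · exact (hDU₁ h).2 rfl
  have hD₀ne : D₀.Nonempty := hC₀ne.mono hCD₀
  have hD₁ne : D₁.Nonempty := hC₁ne.mono hCD₁
  subst hCunion
  exact ⟨D₀, D₁, hD₀, hD₁,
    inf_sup_eq_left_of_le_of_disjoint hCD₀ (hdisj.mono_right hCD₁),
    union_comm C₀ C₁ ▸
      inf_sup_eq_left_of_le_of_disjoint hCD₁ (hdisj.symm.mono_right hCD₀),
    hdisj, (ne_univ_iff_exists_notMem _).mpr ⟨p, hpD⟩,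
    hDU₀.trans inter_subset_left, hDU₁.trans inter_subset_left,
    hC₀, hC₁, hD.coe_of_isClopen hD₀ hD₀ne, hD.coe_of_isClopen hD₁ hD₁ne,
    ssubset_of_isOpen_of_interior_eq_empty hD₀.isOpen hD₀ne hCD₀ hC₀int,
    ssubset_of_isOpen_of_interior_eq_empty hD₁.isOpen hD₁ne hCD₁ hC₁int,
    interior_preimage_coe_eq_empty hD₀.isOpen hC₀int,
    interior_preimage_coe_eq_empty hD₁.isOpen hC₁int⟩

theorem stmt0 {D : Type*} [MetricSpace D] (hD : IsCantorSpace D)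
    (C : Set D) (hCclosed : IsClosed C) (hCproper : C ≠ Set.univ)
    (hCcantor : IsCantorSpace ↥C) (hCentwined : interior C = ∅)
    (C₀ C₁ : Set D) (hCunion : C₀ ∪ C₁ = C) (hCdisj : Disjoint C₀ C₁)
    (hC₀ne : C₀.Nonempty) (hC₁ne : C₁.Nonempty)
    (hC₀clopen : IsClopen (Subtype.val ⁻¹' C₀ : Set ↥C))
    (hC₁clopen : IsClopen (Subtype.val ⁻¹' C₁ : Set ↥C))
    (ε : ℝ) (hε : 0 < ε) :
    ∃ D₀ D₁ : Set D,
      IsClopen D₀ ∧ IsClopen D₁ ∧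
      D₀ ∩ C = C₀ ∧ D₁ ∩ C = C₁ ∧
      Disjoint D₀ D₁ ∧
      D₀ ∪ D₁ ≠ Set.univ ∧
      D₀ ⊆ Metric.thickening ε C₀ ∧ D₁ ⊆ Metric.thickening ε C₁ ∧
      IsCantorSpace ↥C₀ ∧ IsCantorSpace ↥C₁ ∧
      IsCantorSpace ↥D₀ ∧ IsCantorSpace ↥D₁ ∧
      C₀ ⊂ D₀ ∧ C₁ ⊂ D₁ ∧
      interior (Subtype.val ⁻¹' C₀ : Set ↥D₀) = ∅ ∧
      interior (Subtype.val ⁻¹' C₁ : Set ↥D₁) = ∅ :=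
  stmt0_general hD hCcantor hCentwined hCunion hCdisj hC₀ne hC₁ne hC₀clopen hC₁clopen
    isOpen_thickening isOpen_thickening (self_subset_thickening hε C₀)
    (self_subset_thickening hε C₁)
end

section
/- Let D and D′ be Cantor spaces, let C ⊆ D be a proper closed subset which is a Cantor space in the subspace topology and is entwined in D (i.e. has empty interior in D), and let C′ ⊆ D′ be a proper closed subset which is a Cantor space in the subspace topology and is entwined in D′. Then every homeomorphism φ : C → C′ extends to a homeomorphism ψ : D → D′ (i.e. ψ restricted to C equals φ). -/
open Set Filter Topology

/-!
Colour `D` and `D'` by finitely many colours, locally constantly, so that the same colours occur on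
both sides and the two colourings agree along `C ≅ C'`. Such a matched pair can always be refined
so as to decide a given clopen `U ⊆ D`: since `C'` is nowhere dense and `D'` is perfect, every
colour class of `D'` contains points off `C'` that can be put on either side of a splitting, so the
splitting prescribed on `C'` by `U` extends to a clopen set which cuts every colour class, and the
cut is then undone on the classes that `U` does not cut. Going back and forth through the
countably many clopen sets, the colourings become coordinates that embed `D` and `D'` into `ℕ → ℕ`,
with the same image by compactness.
-/

open TopologicalSpace Order

section Splitting

variable {K Y : Type*} [TopologicalSpace K] [TopologicalSpace Y] {j : K → Y}

theorem infinite_diff_of_isNowhereDense [T1Space Y] [PerfectSpace Y] {U S : Set Y}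
    (hU : IsOpen U) (hne : U.Nonempty) (hS : IsNowhereDense S) : (U \ S).Infinite := by
  obtain ⟨y, hyS, hyU⟩ := (interior_eq_empty_iff_dense_compl.1 hS).exists_mem_open hU hne
  have hy : U \ closure S ∈ 𝓝 y := (hU.sdiff isClosed_closure).mem_nhds ⟨hyU, hyS⟩
  exact (infinite_of_mem_nhds y hy).mono (sdiff_subset_sdiff_right subset_closure)

theorem exists_isClopen_preimage_eq [CompactSpace Y] [T2Space Y] [TotallyDisconnectedSpace Y]
    (hj : IsClosedEmbedding j) {W : Set K} (hW : IsClopen W) {A B : Set Y} (hA : IsClosed A)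
    (hB : IsClosed B) (hAB : Disjoint A B) (hAj : Disjoint A (range j))
    (hBj : Disjoint B (range j)) :
    ∃ P : Set Y, IsClopen P ∧ j ⁻¹' P = W ∧ A ⊆ P ∧ B ⊆ Pᶜ := by
  have hdisj : Disjoint (j '' W ∪ A) (j '' Wᶜ ∪ B) := by
    simp only [disjoint_union_left, disjoint_union_right]
    exact ⟨⟨(disjoint_image_iff hj.injective).2 disjoint_compl_right,
      hAj.mono_right (image_subset_range _ _)⟩,
      (hBj.mono_right (image_subset_range _ _)).symm, hAB⟩
  obtain ⟨P, hP, hWA, hWB⟩ := exists_clopen_of_closed_subset_open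
    ((hj.isClosedMap _ hW.isClosed).union hA)
    ((hj.isClosedMap _ hW.compl.isClosed).union hB).isOpen_compl hdisj.subset_compl_right
  obtain ⟨hWP, hAP⟩ := union_subset_iff.1 hWA
  obtain ⟨hWP', hBP⟩ := union_subset_iff.1 (subset_compl_comm.1 hWB)
  refine ⟨P, hP, Subset.antisymm ?_ (image_subset_iff.1 hWP), hAP, hBP⟩
  exact compl_subset_compl.1 (image_subset_iff.1 hWP')

theorem exists_isClopen_preimage_eq_image_eq_range [CompactSpace Y] [T2Space Y]
    [TotallyDisconnectedSpace Y] [PerfectSpace Y] {κ : Type*} (hj : IsClosedEmbedding j)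
    (hj' : IsNowhereDense (range j)) {W : Set K} (hW : IsClopen W) (g : LocallyConstant Y κ) :
    ∃ P : Set Y, IsClopen P ∧ j ⁻¹' P = W ∧ g '' P = range g ∧ g '' Pᶜ = range g := by
  have hfibre (c : range g) : (g ⁻¹' {c.1} \ range j).Nontrivial :=
    (infinite_diff_of_isNowhereDense (g.isLocallyConstant {c.1})
      (preimage_singleton_nonempty.2 c.2) hj').nontrivial
  choose a ha b hb hab using hfibre
  have : Finite (range g) := g.range_finite
  have hdisj : Disjoint (range a) (range b) := by
    rw [disjoint_range_iff]
    intro c d hcd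
    obtain rfl : c = d := Subtype.ext ((ha c).1.symm.trans (hcd ▸ (hb d).1))
    exact hab c hcd
  obtain ⟨P, hP, hPW, haP, hbP⟩ := exists_isClopen_preimage_eq hj hW
    (finite_range a).isClosed (finite_range b).isClosed hdisj
    (disjoint_left.2 <| forall_mem_range.2 fun c => (ha c).2)
    (disjoint_left.2 <| forall_mem_range.2 fun c => (hb c).2)
  refine ⟨P, hP, hPW, (image_subset_range _ _).antisymm ?_, (image_subset_range _ _).antisymm ?_⟩
  · exact fun c hc => ⟨a ⟨c, hc⟩, haP (mem_range_self _), (ha _).1⟩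
  · exact fun c hc => ⟨b ⟨c, hc⟩, hbP (mem_range_self _), (hb _).1⟩

end Splitting

section Transfer

variable {X Y κ : Type*}

/-- The counterpart in `Y` of the set `U ⊆ X`, for colourings `f` of `X` and `g` of `Y`. A colour
class of `Y` goes entirely inside or outside when the corresponding class of `X` does so with
respect to `U`, and it is split along `P` when `U` splits the corresponding class. -/
def transfer (f : X → κ) (g : Y → κ) (U : Set X) (P : Set Y) : Set Y :=
  g ⁻¹' (f '' U) ∩ (P ∪ (g ⁻¹' (f '' Uᶜ))ᶜ)

variable {f : X → κ} {g : Y → κ} {U : Set X} {P : Set Y}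

theorem image_transfer (hP : f '' U ⊆ g '' P) : g '' transfer f g U P = f '' U := by
  refine Subset.antisymm (image_subset_iff.2 inter_subset_left) fun c hc => ?_
  obtain ⟨y, hyP, rfl⟩ := hP hc
  exact ⟨y, ⟨hc, Or.inl hyP⟩, rfl⟩

theorem image_compl_transfer (hgf : range g ⊆ range f) (hP : f '' Uᶜ ⊆ g '' Pᶜ) :
    g '' (transfer f g U P)ᶜ = f '' Uᶜ := by
  refine Subset.antisymm (image_subset_iff.2 fun y hy => ?_) fun c hc => ?_
  · by_contra hyU
    obtain ⟨x, hx⟩ := hgf (mem_range_self y)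
    have hxU : x ∈ U := by_contra fun hxU => hyU ⟨x, hxU, hx⟩
    exact hy ⟨⟨x, hxU, hx⟩, Or.inr hyU⟩
  · obtain ⟨y, hyP, rfl⟩ := hP hc
    exact ⟨y, fun hy => hy.2.elim hyP fun hyU => hyU hc, rfl⟩

theorem preimage_transfer {K : Type*} {i : K → X} {j : K → Y} (hfg : ∀ k, f (i k) = g (j k))
    (hP : j ⁻¹' P = i ⁻¹' U) : j ⁻¹' transfer f g U P = i ⁻¹' U := by
  have hmem (k : K) : j k ∈ P ↔ i k ∈ U := Set.ext_iff.1 hP k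
  ext k
  constructor
  · rintro ⟨-, hk | hk⟩
    · exact (hmem k).1 hk
    · exact by_contra fun hkU => hk ⟨i k, hkU, hfg k⟩
  · exact fun hk => ⟨⟨i k, hk, hfg k⟩, Or.inl ((hmem k).2 hk)⟩

theorem isClopen_transfer [TopologicalSpace Y] {g : LocallyConstant Y κ} (hP : IsClopen P) :
    IsClopen (transfer f g U P) := by
  have hclopen (s : Set κ) : IsClopen (g ⁻¹' s) :=
    ⟨⟨g.isLocallyConstant sᶜ⟩, g.isLocallyConstant s⟩
  exact (hclopen _).inter (hP.union (hclopen _).compl)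

end Transfer

/-- The colouring obtained from `f` by splitting each colour class along the clopen set `U`. Its
colour `Nat.bit b c` encodes the pair of the old colour `c` and the side `b` of `U`, which keeps
all colourings in the single type `ℕ`. -/
noncomputable def bisect {X : Type*} [TopologicalSpace X] (f : LocallyConstant X ℕ)
    (U : Clopens X) : LocallyConstant X ℕ where
  toFun x := Nat.bit ((U : Set X).boolIndicator x) (f x)
  isLocallyConstant := f.isLocallyConstant.comp₂
    ((IsLocallyConstant.iff_continuous _).2
      ((continuous_boolIndicator_iff_isClopen _).2 U.isClopen)) fun c b => Nat.bit b c

section Bisect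

variable {X : Type*} [TopologicalSpace X] (f : LocallyConstant X ℕ) (U : Clopens X)

theorem bisect_apply (x : X) : bisect f U x = Nat.bit ((U : Set X).boolIndicator x) (f x) :=
  rfl

theorem div2_comp_bisect : Nat.div2 ∘ bisect f U = f :=
  funext fun _ => Nat.div2_bit _ _

theorem bisect_preimage_bodd : bisect f U ⁻¹' {n | n.bodd = true} = U := by
  ext x
  simp [bisect_apply, (U : Set X).mem_iff_boolIndicator]

theorem range_bisect :
    range (bisect f U) = Nat.bit true '' (f '' U) ∪ Nat.bit false '' (f '' (U : Set X)ᶜ) := by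
  rw [← image_univ, ← union_compl_self (U : Set X), image_union, image_image, image_image]
  congr 1 <;> refine image_congr fun x hx => ?_
  · rw [bisect_apply, ((U : Set X).mem_iff_boolIndicator x).1 hx]
  · rw [bisect_apply, ((U : Set X).notMem_iff_boolIndicator x).1 hx]

end Bisect

/-- A pair of locally constant colourings of `X` and `Y` that use the same colours and agree along
the maps `i : K → X` and `j : K → Y`. It is a finite approximation to a homeomorphism `X ≃ₜ Y`
carrying `i` to `j`: points are to be sent to points of the same colour. -/
structure MatchedColoring {K X Y : Type*} [TopologicalSpace X] [TopologicalSpace Y]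
    (i : K → X) (j : K → Y) where
  left : LocallyConstant X ℕ
  right : LocallyConstant Y ℕ
  range_eq : range left = range right
  apply_eq : ∀ k, left (i k) = right (j k)

namespace MatchedColoring

variable {K X Y : Type*} [TopologicalSpace X] [TopologicalSpace Y] {i : K → X} {j : K → Y}

/-- Matched colourings are ordered by refinement, the finer pair being the larger one. -/
instance : Preorder (MatchedColoring i j) where
  le p q := ∃ r : ℕ → ℕ, r ∘ q.left = p.left ∧ r ∘ q.right = p.right
  le_refl _ := ⟨id, rfl, rfl⟩
  le_trans := by
    rintro p q s ⟨r, hl, hr⟩ ⟨r', hl', hr'⟩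
    exact ⟨r ∘ r', by rw [Function.comp_assoc, hl', hl], by rw [Function.comp_assoc, hr', hr]⟩

instance [Nonempty X] [Nonempty Y] : Nonempty (MatchedColoring i j) :=
  ⟨{ left := .const X 0, right := .const Y 0, range_eq := by simp, apply_eq := fun _ => rfl }⟩

/-- The matched colouring with the roles of the two spaces exchanged. -/
def swap (p : MatchedColoring i j) : MatchedColoring j i where
  left := p.right
  right := p.left
  range_eq := p.range_eq.symm
  apply_eq k := (p.apply_eq k).symm

theorem swap_le_swap {p q : MatchedColoring i j} (h : p ≤ q) : p.swap ≤ q.swap :=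
  h.imp fun _ => And.symm

theorem exists_clopens_image_eq [TopologicalSpace K] [CompactSpace Y] [T2Space Y]
    [TotallyDisconnectedSpace Y] [PerfectSpace Y] (hi : Continuous i) (hj : IsClosedEmbedding j)
    (hj' : IsNowhereDense (range j)) (p : MatchedColoring i j) (U : Clopens X) :
    ∃ V : Clopens Y, i ⁻¹' U = j ⁻¹' V ∧ p.left '' U = p.right '' V ∧
      p.left '' (U : Set X)ᶜ = p.right '' (V : Set Y)ᶜ := by
  obtain ⟨P, hP, hPU, hP₁, hP₀⟩ :=
    exists_isClopen_preimage_eq_image_eq_range hj hj' (U.isClopen.preimage hi) p.right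
  refine ⟨⟨transfer p.left p.right U P, isClopen_transfer hP⟩, ?_, ?_, ?_⟩
  · exact (preimage_transfer p.apply_eq hPU).symm
  · refine (image_transfer ?_).symm
    rw [hP₁, ← p.range_eq]
    exact image_subset_range _ _
  · refine (image_compl_transfer p.range_eq.ge ?_).symm
    rw [hP₀, ← p.range_eq]
    exact image_subset_range _ _

theorem isCofinal_left [TopologicalSpace K] [CompactSpace Y] [T2Space Y]
    [TotallyDisconnectedSpace Y] [PerfectSpace Y] (hi : Continuous i) (hj : IsClosedEmbedding j)
    (hj' : IsNowhereDense (range j)) (U : Clopens X) :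
    IsCofinal {p : MatchedColoring i j | ∃ s : Set ℕ, p.left ⁻¹' s = U} := by
  intro p
  obtain ⟨V, hUV, hU, hUc⟩ := p.exists_clopens_image_eq hi hj hj' U
  let q : MatchedColoring i j :=
    { left := bisect p.left U
      right := bisect p.right V
      range_eq := by rw [range_bisect, range_bisect, hU, hUc]
      apply_eq := fun k => by
        change Nat.bit ((i ⁻¹' U).boolIndicator k) (p.left (i k)) = _
        rw [hUV, p.apply_eq k]
        rfl }
  exact ⟨q, ⟨_, bisect_preimage_bodd _ _⟩, Nat.div2, div2_comp_bisect _ _, div2_comp_bisect _ _⟩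

theorem isCofinal_right [TopologicalSpace K] [CompactSpace X] [T2Space X]
    [TotallyDisconnectedSpace X] [PerfectSpace X] (hi : IsClosedEmbedding i)
    (hi' : IsNowhereDense (range i)) (hj : Continuous j) (V : Clopens Y) :
    IsCofinal {p : MatchedColoring i j | ∃ s : Set ℕ, p.right ⁻¹' s = V} := by
  intro p
  obtain ⟨q, hq, hpq⟩ := isCofinal_left hj hi hi' V p.swap
  exact ⟨q.swap, hq, swap_le_swap hpq⟩

theorem range_left_subset_range_right [CompactSpace Y] {ι : Type*} [Nonempty ι]
    {p : ι → MatchedColoring i j} (hp : Directed (· ≤ ·) p) :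
    range (fun x a => (p a).left x) ⊆ range (fun y a => (p a).right y) := by
  rintro _ ⟨x, rfl⟩
  let S (a : ι) : Set Y := (p a).right ⁻¹' {(p a).left x}
  have hclosed (a : ι) : IsClosed (S a) :=
    (isClosed_discrete _).preimage (p a).right.continuous
  have hne (a : ι) : (S a).Nonempty := by
    obtain ⟨y, hy⟩ : (p a).left x ∈ range (p a).right := (p a).range_eq ▸ mem_range_self x
    exact ⟨y, hy⟩
  have hanti {a b : ι} (hab : p a ≤ p b) : S b ⊆ S a := by
    obtain ⟨r, hl, hr⟩ := hab
    intro y hy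
    change (p a).right y = (p a).left x
    rw [← hl, ← hr]
    exact congrArg r hy
  have hdirected : Directed (· ⊇ ·) S := fun a b =>
    (hp a b).imp fun _ h => ⟨hanti h.1, hanti h.2⟩
  obtain ⟨y, hy⟩ := IsCompact.nonempty_iInter_of_directed_nonempty_isCompact_isClosed S hdirected
    hne (fun a => (hclosed a).isCompact) hclosed
  exact ⟨y, funext (mem_iInter.1 hy)⟩

theorem range_left_eq_range_right [CompactSpace X] [CompactSpace Y] {ι : Type*} [Nonempty ι]
    {p : ι → MatchedColoring i j} (hp : Directed (· ≤ ·) p) :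
    range (fun x a => (p a).left x) = range (fun y a => (p a).right y) :=
  (range_left_subset_range_right hp).antisymm
    (range_left_subset_range_right (hp.mono_comp (g := swap) _ fun _ _ => swap_le_swap))

end MatchedColoring

theorem countable_clopens_of_metrizableSpace (X : Type*) [TopologicalSpace X] [CompactSpace X]
    [MetrizableSpace X] [TotallyDisconnectedSpace X] : Countable (Clopens X) := by
  let := metrizableSpaceMetric X
  exact Clopens.countable_iff_secondCountable.2 inferInstance

theorem isEmbedding_of_forall_clopens {X ι κ : Type*} [TopologicalSpace X] [CompactSpace X]
    [TotallySeparatedSpace X] [TopologicalSpace κ] [DiscreteTopology κ]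
    {f : ι → LocallyConstant X κ} (hf : ∀ U : Clopens X, ∃ a, ∃ s : Set κ, f a ⁻¹' s = U) :
    IsEmbedding fun x a => f a x := by
  refine (Continuous.isClosedEmbedding (continuous_pi fun a => (f a).continuous)
    fun x x' hxx' => ?_).isEmbedding
  by_contra hne
  obtain ⟨U, hU, hx, hx'⟩ := exists_isClopen_of_totally_separated hne
  obtain ⟨a, s, rfl⟩ : ∃ a, ∃ s : Set κ, f a ⁻¹' s = U := hf ⟨U, hU⟩
  have hfa : f a x = f a x' := congrFun hxx' a
  exact hx' (by rwa [mem_preimage, ← hfa])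

theorem exists_homeomorph_of_range_eq {X Y Z : Type*} [TopologicalSpace X] [TopologicalSpace Y]
    [TopologicalSpace Z] {F : X → Z} {G : Y → Z} (hF : IsEmbedding F) (hG : IsEmbedding G)
    (h : range F = range G) : ∃ ψ : X ≃ₜ Y, ∀ x, G (ψ x) = F x := by
  refine ⟨hF.toHomeomorph.trans ((Homeomorph.setCongr h).trans hG.toHomeomorph.symm), fun x => ?_⟩
  exact congrArg Subtype.val (hG.toHomeomorph.apply_symm_apply ⟨F x, h ▸ mem_range_self x⟩)

theorem stmt1_general {D D' K : Type*} [TopologicalSpace D] [TopologicalSpace D']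
    [TopologicalSpace K] (hD : IsCantorSpace D) (hD' : IsCantorSpace D')
    {i : K → D} (hi : IsClosedEmbedding i) (hi' : IsNowhereDense (range i))
    {j : K → D'} (hj : IsClosedEmbedding j) (hj' : IsNowhereDense (range j)) :
    ∃ ψ : D ≃ₜ D', ∀ k, ψ (i k) = j k := by
  obtain ⟨_, _, _, _, hperfect⟩ := hD
  obtain ⟨_, _, _, _, hperfect'⟩ := hD'
  have := perfectSpace_iff_forall_not_isolated.2 hperfect
  have := perfectSpace_iff_forall_not_isolated.2 hperfect'
  have := countable_clopens_of_metrizableSpace D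
  have := countable_clopens_of_metrizableSpace D'
  have := Encodable.ofCountable (Clopens D ⊕ Clopens D')
  let 𝒟 : Clopens D ⊕ Clopens D' → Cofinal (MatchedColoring i j) := Sum.elim
    (fun U => ⟨_, MatchedColoring.isCofinal_left hi.continuous hj hj' U⟩)
    (fun V => ⟨_, MatchedColoring.isCofinal_right hi hi' hj.continuous V⟩)
  let p := sequenceOfCofinals (Classical.arbitrary (MatchedColoring i j)) 𝒟
  have hp : Monotone p := sequenceOfCofinals.monotone _ 𝒟
  have hF : IsEmbedding fun x n => (p n).left x :=
    isEmbedding_of_forall_clopens fun U => ⟨_, sequenceOfCofinals.encode_mem _ 𝒟 (.inl U)⟩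
  have hG : IsEmbedding fun y n => (p n).right y :=
    isEmbedding_of_forall_clopens fun V => ⟨_, sequenceOfCofinals.encode_mem _ 𝒟 (.inr V)⟩
  obtain ⟨ψ, hψ⟩ := exists_homeomorph_of_range_eq hF hG
    (MatchedColoring.range_left_eq_range_right hp.directed_le)
  exact ⟨ψ, fun k => hG.injective ((hψ (i k)).trans (funext fun n => (p n).apply_eq k))⟩

theorem stmt1 {D D' : Type*} [TopologicalSpace D] [TopologicalSpace D']
    (hD : IsCantorSpace D) (hD' : IsCantorSpace D')
    (C : Set D) (hCclosed : IsClosed C) (hCproper : C ≠ Set.univ)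
    (hCcantor : IsCantorSpace ↥C) (hCentwined : interior C = ∅)
    (C' : Set D') (hC'closed : IsClosed C') (hC'proper : C' ≠ Set.univ)
    (hC'cantor : IsCantorSpace ↥C') (hC'entwined : interior C' = ∅)
    (φ : ↥C ≃ₜ ↥C') :
    ∃ ψ : D ≃ₜ D', ∀ x : ↥C, ψ ↑x = ↑(φ x) :=
  stmt1_general (j := Subtype.val ∘ φ) hD hD' hCclosed.isClosedEmbedding_subtypeVal
    (by rwa [Subtype.range_val, hCclosed.isNowhereDense_iff])
    (hC'closed.isClosedEmbedding_subtypeVal.comp φ.isClosedEmbedding)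
    (by rwa [φ.surjective.range_comp, Subtype.range_val, hC'closed.isNowhereDense_iff])
end

section
/- Any two ω-Cantor spaces are homeomorphic. That is, if X with exhaustion X₁ ⊆ X₂ ⊆ ⋯ and X′ with exhaustion X′₁ ⊆ X′₂ ⊆ ⋯ are both ω-Cantor spaces, then there is a homeomorphism X → X′. -/
open Set Filter Topology

/-- An ω-Cantor space structure on `X` with exhaustion `Xn`: the `Xn` are increasing with
union `X`, `X` carries the direct limit topology, each `Xn` is a Cantor space in the subspace
topology, and each `Xn` is entwined in `Xn₊₁` (a proper subset with empty interior there). -/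
def IsOmegaCantor (X : Type*) [TopologicalSpace X] (Xn : ℕ → Set X) : Prop :=
  Monotone Xn ∧ (⋃ n, Xn n) = Set.univ ∧
  (∀ U : Set X, IsOpen U ↔ ∀ n, IsOpen (Subtype.val ⁻¹' U : Set ↥(Xn n))) ∧
  (∀ n, IsCantorSpace ↥(Xn n)) ∧
  (∀ n, Xn n ⊂ Xn (n + 1)) ∧
  (∀ n, interior (Subtype.val ⁻¹' (Xn n) : Set ↥(Xn (n + 1))) = ∅)

/-!
A homeomorphism between closed nowhere dense subsets of two Cantor spaces extends to the Cantor
spaces (Knaster–Reichbach). Climbing the two exhaustions, starting from the extension of the empty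
map, this yields compatible homeomorphisms `Xₙ ≃ₜ Xₙ'`, which glue because both topologies are
direct limits.

The extension is a back-and-forth argument: a finite stage labels the points of both spaces by
locally constant functions with the same range that agree on the closed subsets. A clopen set of
one space splits the labels, and the splitting can be copied to the other space: a fibre there is
not covered by the nowhere dense subset and has no isolated points, so it has room for both halves.
The pairs of points with equal labels at all stages form the graph of the extension.
-/

section Clopen

open TopologicalSpace

variable {D S : Type*} [TopologicalSpace D]

theorem isLocallyConstant_mem_of_isClopen {U : Set D} (hU : IsClopen U) :
    IsLocallyConstant (· ∈ U) := by
  refine (IsLocallyConstant.iff_eventually_eq _).2 fun x => ?_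
  by_cases hx : x ∈ U
  · filter_upwards [hU.isOpen.mem_nhds hx] with y hy
    exact propext (iff_of_true hy hx)
  · filter_upwards [hU.compl.isOpen.mem_nhds hx] with y hy
    exact propext (iff_of_false hy hx)

theorem isOpen_setOfPred_mem_apply (a : LocallyConstant D S) {V : S → Set D}
    (hV : ∀ s, IsOpen (V s)) : IsOpen {x | x ∈ V (a x)} := by
  refine isOpen_iff_mem_nhds.2 fun x hx => ?_
  filter_upwards [a.isLocallyConstant.eventually_eq x, (hV (a x)).mem_nhds hx]
    with y (hay : a y = a x) hy
  rwa [← hay] at hy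

theorem isClopen_setOfPred_mem_apply (a : LocallyConstant D S) {V : S → Set D}
    (hV : ∀ s, IsClopen (V s)) : IsClopen {x | x ∈ V (a x)} :=
  ⟨isOpen_compl_iff.1 (isOpen_setOfPred_mem_apply a fun s => (hV s).compl.isOpen),
    isOpen_setOfPred_mem_apply a fun s => (hV s).isOpen⟩

theorem mem_image_setOfPred_mem_apply {α β : Type*} {a : α → β} {V : β → Set α} {s : β} :
    s ∈ a '' {x | x ∈ V (a x)} ↔ s ∈ a '' V s := by
  constructor <;> rintro ⟨x, hx, rfl⟩ <;> exact ⟨x, hx, rfl⟩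

theorem exists_clopens_splitting [CompactSpace D] [T2Space D] [TotallyDisconnectedSpace D]
    [PerfectSpace D] {A B F : Set D} (hA : IsClosed A) (hB : IsClosed B) (hAB : Disjoint A B)
    (hF : IsOpen F) (hne : (F \ (A ∪ B)).Nonempty) :
    ∃ V : Clopens D, A ⊆ V ∧ Disjoint B V ∧ (F ∩ V).Nonempty ∧ (F \ V).Nonempty := by
  obtain ⟨x, hx⟩ := hne
  have : NeBot (𝓝[≠] x) := perfectSpace_iff_forall_not_isolated.1 inferInstance x
  have hx_nhds : F \ (A ∪ B) ∈ 𝓝 x := (hF.sdiff (hA.union hB)).mem_nhds hx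
  obtain ⟨u, ⟨huF, huAB⟩, v, ⟨hvF, hvAB⟩, huv⟩ := (infinite_of_mem_nhds x hx_nhds).nontrivial
  have hdisj : Disjoint (insert u A) (insert v B) := by
    simp only [disjoint_insert_left, disjoint_insert_right, mem_insert_iff, mem_union] at *
    tauto
  obtain ⟨V, hV, hAV, hVB⟩ := exists_clopen_of_closed_subset_open (hA.isCompact.insert u).isClosed
    (hB.isCompact.insert v).isClosed.isOpen_compl hdisj.subset_compl_right
  obtain ⟨huV, hAV⟩ := insert_subset_iff.1 hAV
  obtain ⟨hvV, hBV⟩ := insert_subset_iff.1 (subset_compl_comm.1 hVB)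
  exact ⟨⟨V, hV⟩, hAV, disjoint_left.2 hBV, ⟨u, huF, huV⟩, v, hvF, hvV⟩

theorem eq_of_forall_eq_of_clopens_factorsThrough [TotallySeparatedSpace D] {ι : Type*}
    {T : ι → Type*} {a : ∀ k, D → T k}
    (ha : ∀ U : Clopens D, ∃ k, Function.FactorsThrough (· ∈ U) (a k)) {x y : D}
    (hxy : ∀ k, a k x = a k y) : x = y := by
  by_contra hne
  obtain ⟨U, hU, hxU, hyU⟩ := exists_isClopen_of_totally_separated hne
  obtain ⟨k, hk⟩ := ha ⟨U, hU⟩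
  exact hyU ((hk (hxy k)).mp hxU)

end Clopen

section ClosedRelation

variable {D D' : Type*} [TopologicalSpace D] [TopologicalSpace D'] [CompactSpace D] [T2Space D]
  [CompactSpace D'] [T2Space D']

theorem exists_homeomorph_of_isClosed_of_existsUnique {R : D → D' → Prop}
    (hR : IsClosed {p : D × D' | R p.1 p.2}) (hleft : ∀ x, ∃! y, R x y)
    (hright : ∀ y, ∃! x, R x y) : ∃ f : D ≃ₜ D', ∀ x, R x (f x) := by
  let Γ := {p : D × D' | R p.1 p.2}
  have : CompactSpace Γ := isCompact_iff_compactSpace.1 hR.isCompact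
  have hfst : Function.Bijective fun p : Γ => p.1.1 := by
    refine ⟨fun p q (hpq : p.1.1 = q.1.1) => ?_, fun x => ?_⟩
    · exact Subtype.ext (Prod.ext hpq ((hleft p.1.1).unique p.2 (hpq ▸ q.2)))
    · obtain ⟨y, hxy, -⟩ := hleft x
      exact ⟨⟨(x, y), hxy⟩, rfl⟩
  have hsnd : Function.Bijective fun p : Γ => p.1.2 := by
    refine ⟨fun p q (hpq : p.1.2 = q.1.2) => ?_, fun y => ?_⟩
    · exact Subtype.ext (Prod.ext ((hright p.1.2).unique p.2 (hpq ▸ q.2)) hpq)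
    · obtain ⟨x, hxy, -⟩ := hright y
      exact ⟨⟨(x, y), hxy⟩, rfl⟩
  let e : Γ ≃ₜ D := Continuous.homeoOfEquivCompactToT2 (f := .ofBijective _ hfst)
    (continuous_fst.comp continuous_subtype_val)
  let e' : Γ ≃ₜ D' := Continuous.homeoOfEquivCompactToT2 (f := .ofBijective _ hsnd)
    (continuous_snd.comp continuous_subtype_val)
  refine ⟨e.symm.trans e', fun x => ?_⟩
  have hx : (e.symm x).1.1 = x := e.apply_symm_apply x
  have hmem : R (e.symm x).1.1 (e.symm x).1.2 := (e.symm x).2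
  rwa [hx] at hmem

end ClosedRelation

section BackAndForth

open TopologicalSpace

variable {Z D D' : Type*} [TopologicalSpace D] [TopologicalSpace D']

/-- A finite stage of the back-and-forth construction of a homeomorphism `D ≃ₜ D'` carrying `i` to
`j`: the homeomorphism is required to preserve the labels. -/
structure Matching (i : Z → D) (j : Z → D') where
  Label : Type
  left : LocallyConstant D Label
  right : LocallyConstant D' Label
  range_eq : range left = range right
  left_eq_right : ∀ z, left (i z) = right (j z)

namespace Matching

variable {i : Z → D} {j : Z → D'}

/-- The relation between points with equal labels, which is to contain the graph of the
homeomorphism under construction. -/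
def graph (m : Matching i j) : Set (D × D') := {p | m.left p.1 = m.right p.2}

/-- Matchings are ordered by refinement, so larger matchings have smaller graphs. -/
instance : Preorder (Matching i j) := Preorder.lift (OrderDual.toDual ∘ graph)

/-- The matching with the two spaces exchanged. -/
def symm (m : Matching i j) : Matching j i where
  Label := m.Label
  left := m.right
  right := m.left
  range_eq := m.range_eq.symm
  left_eq_right z := (m.left_eq_right z).symm

theorem mem_graph_symm {m : Matching i j} {x : D} {y : D'} :
    (y, x) ∈ m.symm.graph ↔ (x, y) ∈ m.graph :=
  eq_comm

theorem symm_monotone : Monotone (symm : Matching i j → Matching j i) :=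
  fun _ _ hle _ hp => mem_graph_symm.2 (hle (mem_graph_symm.1 hp))

/-- The matching with a single label, at which the construction starts. -/
def trivial [Nonempty D] [Nonempty D'] (i : Z → D) (j : Z → D') : Matching i j where
  Label := Unit
  left := .const D ()
  right := .const D' ()
  range_eq := range_const.trans range_const.symm
  left_eq_right _ := rfl

theorem isClosed_graph (m : Matching i j) : IsClosed m.graph := by
  let _ : TopologicalSpace m.Label := ⊥
  have : DiscreteTopology m.Label := ⟨rfl⟩
  exact isClosed_eq (m.left.continuous.comp continuous_fst) (m.right.continuous.comp continuous_snd)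

/-- The refinement of a matching that records membership in `U` on the left and in `V` on the
right. -/
def refine (m : Matching i j) (U : Clopens D) (V : Clopens D') (hUV : ∀ z, i z ∈ U ↔ j z ∈ V)
    (himage : m.left '' U = m.right '' V) (hcompl : m.left '' Uᶜ = m.right '' Vᶜ) :
    Matching i j where
  Label := Prop × m.Label
  left := ⟨fun x => (x ∈ U, m.left x),
    (isLocallyConstant_mem_of_isClopen U.isClopen).prodMk m.left.isLocallyConstant⟩
  right := ⟨fun y => (y ∈ V, m.right y),
    (isLocallyConstant_mem_of_isClopen V.isClopen).prodMk m.right.isLocallyConstant⟩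
  range_eq := by
    ext ⟨P, s⟩
    by_cases hP : P
    · simpa [hP] using Set.ext_iff.1 himage s
    · simpa [hP] using Set.ext_iff.1 hcompl s
  left_eq_right z := Prod.ext (propext (hUV z)) (m.left_eq_right z)

section Refinement

variable [TopologicalSpace Z] [CompactSpace D'] [T2Space D'] [TotallyDisconnectedSpace D']
  [PerfectSpace D']

theorem exists_clopens_mirror_on_fiber (m : Matching i j) (hi : Continuous i)
    (hj : IsClosedEmbedding j) (hj_int : interior (range j) = ∅) (U : Clopens D) (s : m.Label) :
    ∃ V : Clopens D', (∀ z, m.left (i z) = s → (i z ∈ U ↔ j z ∈ V)) ∧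
      (s ∈ m.left '' U ↔ s ∈ m.right '' V) ∧ (s ∈ m.left '' Uᶜ ↔ s ∈ m.right '' Vᶜ) := by
  have hrange : s ∈ range m.right ↔ s ∈ m.left '' U ∨ s ∈ m.left '' Uᶜ := by
    rw [← m.range_eq, ← image_univ, ← union_compl_self (U : Set D), image_union, mem_union]
  by_cases hsU : s ∈ m.left '' U
  swap
  · exact ⟨⊥, fun z hz => iff_of_false (fun hzU => hsU ⟨_, hzU, hz⟩) id, by simp [hsU],
      by simpa [hsU] using hrange.symm⟩
  by_cases hsUc : s ∈ m.left '' Uᶜ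
  swap
  · exact ⟨⊤, fun z hz => iff_of_true (by_contra fun hzU => hsUc ⟨_, hzU, hz⟩) ⟨⟩,
      by simpa [hsUc] using hrange.symm, by simp [hsUc]⟩
  have hF : IsOpen {y | m.right y = s} := m.right.isLocallyConstant.isOpen_fiber s
  obtain ⟨y, hys, hyj⟩ := (interior_eq_empty_iff_dense_compl.1 hj_int).inter_open_nonempty _ hF
    (hrange.2 (Or.inl hsU))
  obtain ⟨V, hUV, hUcV, ⟨u, hus, huV⟩, v, hvs, hvV⟩ := exists_clopens_splitting
    (hj.isClosedMap _ (U.isClopen.isClosed.preimage hi))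
    (hj.isClosedMap _ (U.isClopen.compl.isClosed.preimage hi))
    ((disjoint_image_iff hj.injective).2 (disjoint_compl_right.preimage i)) hF
    ⟨y, hys, fun hy => hyj (hy.elim (image_subset_range _ _ ·) (image_subset_range _ _ ·))⟩
  refine ⟨V, fun z _ => ⟨fun hz => hUV ⟨z, hz, rfl⟩, fun hz => ?_⟩,
    iff_of_true hsU ⟨u, huV, hus⟩, iff_of_true hsUc ⟨v, hvV, hvs⟩⟩
  exact by_contra fun hzU => disjoint_left.1 hUcV ⟨z, hzU, rfl⟩ hz

theorem exists_clopens_mirror (m : Matching i j) (hi : Continuous i) (hj : IsClosedEmbedding j)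
    (hj_int : interior (range j) = ∅) (U : Clopens D) :
    ∃ V : Clopens D', (∀ z, i z ∈ U ↔ j z ∈ V) ∧
      m.left '' U = m.right '' V ∧ m.left '' Uᶜ = m.right '' Vᶜ := by
  choose V hV himage hcompl using m.exists_clopens_mirror_on_fiber hi hj hj_int U
  refine ⟨⟨_, isClopen_setOfPred_mem_apply m.right fun s => (V s).isClopen⟩, fun z => ?_, ?_, ?_⟩
  · exact hV _ z (m.left_eq_right z)
  · ext s
    exact (himage s).trans (mem_image_setOfPred_mem_apply (V := fun s => (V s : Set D'))).symm
  · ext s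
    exact (hcompl s).trans (mem_image_setOfPred_mem_apply (V := fun s => (V s : Set D')ᶜ)).symm

theorem exists_le_factorsThrough_left (m : Matching i j) (hi : Continuous i)
    (hj : IsClosedEmbedding j) (hj_int : interior (range j) = ∅) (U : Clopens D) :
    ∃ m' : Matching i j, Function.FactorsThrough (· ∈ U) m'.left ∧ m ≤ m' := by
  obtain ⟨V, hUV, himage, hcompl⟩ := m.exists_clopens_mirror hi hj hj_int U
  exact ⟨m.refine U V hUV himage hcompl, fun _ _ h => congrArg Prod.fst h,
    fun _ h => congrArg Prod.snd h⟩

end Refinement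

theorem existsUnique_forall_mem_graph [CompactSpace D'] [TotallySeparatedSpace D'] {ι : Type*}
    [Nonempty ι] {M : ι → Matching i j} (hM : Directed (· ≤ ·) M)
    (hsep : ∀ V : Clopens D', ∃ k, Function.FactorsThrough (· ∈ V) (M k).right) (x : D) :
    ∃! y, ∀ k, (x, y) ∈ (M k).graph := by
  let fiber (k : ι) : Set D' := Prod.mk x ⁻¹' (M k).graph
  have hclosed (k : ι) : IsClosed (fiber k) := (M k).isClosed_graph.preimage (by fun_prop)
  obtain ⟨y, hy⟩ := IsCompact.nonempty_iInter_of_directed_nonempty_isCompact_isClosed fiber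
    (fun k l => (hM k l).imp fun _ hle => hle.imp preimage_mono preimage_mono)
    (fun k => (M k).range_eq.subset ⟨x, rfl⟩ |>.imp fun _ => Eq.symm)
    (fun k => (hclosed k).isCompact) hclosed
  rw [mem_iInter] at hy
  exact ⟨y, hy, fun y' hy' => eq_of_forall_eq_of_clopens_factorsThrough hsep fun k =>
    (hy' k).symm.trans (hy k)⟩

section Extension

variable [TopologicalSpace Z]
  [Nonempty D] [CompactSpace D] [T2Space D] [SecondCountableTopology D]
  [TotallyDisconnectedSpace D] [PerfectSpace D]
  [Nonempty D'] [CompactSpace D'] [T2Space D'] [SecondCountableTopology D']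
  [TotallyDisconnectedSpace D'] [PerfectSpace D']

theorem exists_monotone_forall_clopens_factorsThrough
    (hi : IsClosedEmbedding i) (hj : IsClosedEmbedding j)
    (hi_int : interior (range i) = ∅) (hj_int : interior (range j) = ∅) :
    ∃ M : ℕ → Matching i j, Monotone M ∧
      (∀ U : Clopens D, ∃ n, Function.FactorsThrough (· ∈ U) (M n).left) ∧
      ∀ V : Clopens D', ∃ n, Function.FactorsThrough (· ∈ V) (M n).right := by
  have : Countable (Clopens D) := Clopens.countable_iff_secondCountable.2 inferInstance
  have : Countable (Clopens D') := Clopens.countable_iff_secondCountable.2 inferInstance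
  let _ := Encodable.ofCountable (Clopens D ⊕ Clopens D')
  let separating : Clopens D ⊕ Clopens D' → Order.Cofinal (Matching i j) := Sum.elim
    (fun U => ⟨{m | Function.FactorsThrough (· ∈ U) m.left}, fun m =>
      m.exists_le_factorsThrough_left hi.continuous hj hj_int U⟩)
    (fun V => ⟨{m | Function.FactorsThrough (· ∈ V) m.right}, fun m =>
      let ⟨m', hV, hle⟩ := m.symm.exists_le_factorsThrough_left hj.continuous hi hi_int V
      ⟨m'.symm, hV, symm_monotone hle⟩⟩)
  let M := Order.sequenceOfCofinals (trivial i j) separating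
  have hM (c) : M (Encodable.encode c + 1) ∈ separating c :=
    Order.sequenceOfCofinals.encode_mem _ _ c
  exact ⟨M, Order.sequenceOfCofinals.monotone _ _, fun U => ⟨_, hM (.inl U)⟩,
    fun V => ⟨_, hM (.inr V)⟩⟩

end Extension

end Matching

theorem exists_homeomorph_extending_of_isClosedEmbedding [TopologicalSpace Z]
    {i : Z → D} {j : Z → D'}
    [Nonempty D] [CompactSpace D] [T2Space D] [SecondCountableTopology D]
    [TotallyDisconnectedSpace D] [PerfectSpace D]
    [Nonempty D'] [CompactSpace D'] [T2Space D'] [SecondCountableTopology D']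
    [TotallyDisconnectedSpace D'] [PerfectSpace D']
    (hi : IsClosedEmbedding i) (hj : IsClosedEmbedding j)
    (hi_int : interior (range i) = ∅) (hj_int : interior (range j) = ∅) :
    ∃ f : D ≃ₜ D', ∀ z, f (i z) = j z := by
  obtain ⟨M, hM, hleft, hright⟩ :=
    Matching.exists_monotone_forall_clopens_factorsThrough hi hj hi_int hj_int
  have hclosed : IsClosed {p | ∀ n, p ∈ (M n).graph} := by
    simpa only [ofPred_forall, ofPred_mem_eq] using isClosed_iInter fun n => (M n).isClosed_graph
  have hunique (x : D) : ∃! y, ∀ n, (x, y) ∈ (M n).graph :=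
    Matching.existsUnique_forall_mem_graph hM.directed_le hright x
  have hunique' (y : D') : ∃! x, ∀ n, (x, y) ∈ (M n).graph := by
    simpa only [Function.comp_apply, Matching.mem_graph_symm] using
      Matching.existsUnique_forall_mem_graph (Matching.symm_monotone.comp hM).directed_le hleft y
  obtain ⟨f, hf⟩ := exists_homeomorph_of_isClosed_of_existsUnique hclosed hunique hunique'
  exact ⟨f, fun z => (hunique (i z)).unique (hf (i z)) fun n => (M n).left_eq_right z⟩

theorem IsCantorSpace.exists_homeomorph_extending [TopologicalSpace Z] {i : Z → D} {j : Z → D'}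
    (hD : IsCantorSpace D) (hD' : IsCantorSpace D')
    (hi : IsClosedEmbedding i) (hj : IsClosedEmbedding j)
    (hi_int : interior (range i) = ∅) (hj_int : interior (range j) = ∅) :
    ∃ f : D ≃ₜ D', ∀ z, f (i z) = j z := by
  obtain ⟨_, _, _, _, hD_perfect⟩ := hD
  obtain ⟨_, _, _, _, hD'_perfect⟩ := hD'
  have := perfectSpace_iff_forall_not_isolated.2 hD_perfect
  have := perfectSpace_iff_forall_not_isolated.2 hD'_perfect
  let _ := metrizableSpaceMetric D
  let _ := metrizableSpaceMetric D'
  exact exists_homeomorph_extending_of_isClosedEmbedding hi hj hi_int hj_int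

theorem isClosedEmbedding_of_isEmpty [TopologicalSpace Z] [IsEmpty Z] (f : Z → D) :
    IsClosedEmbedding f where
  toIsEmbedding := .of_subsingleton f
  isClosed_range := by rw [range_eq_empty]; exact isClosed_empty

theorem IsCantorSpace.nonempty_homeomorph (hD : IsCantorSpace D) (hD' : IsCantorSpace D') :
    Nonempty (D ≃ₜ D') := by
  obtain ⟨f, -⟩ := hD.exists_homeomorph_extending hD' (isClosedEmbedding_of_isEmpty Empty.elim)
    (isClosedEmbedding_of_isEmpty Empty.elim) (by rw [range_eq_empty, interior_empty])
    (by rw [range_eq_empty, interior_empty])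
  exact ⟨f⟩

end BackAndForth

section Gluing

variable {ι X Y : Type*} {A : ι → Set X} {B : ι → Set Y}

theorem exists_equiv_of_directed_iUnion (hA : Directed (· ⊆ ·) A) (hA_univ : ⋃ n, A n = univ)
    (hB_univ : ⋃ n, B n = univ) (f : ∀ n, A n ≃ B n)
    (hf : ∀ m n (x : X) (hm : x ∈ A m) (hn : x ∈ A n), (f m ⟨x, hm⟩ : Y) = f n ⟨x, hn⟩) :
    ∃ e : X ≃ Y, ∀ n (x : A n), e x = f n x := by
  let F : X → Y := liftCover A (fun n x => f n x) hf hA_univ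
  have hF (n) (x : A n) : F x = f n x := liftCover_coe x
  refine ⟨.ofBijective F ⟨fun x x' hxx' => ?_, fun y => ?_⟩, hF⟩
  · obtain ⟨m, hm⟩ := mem_iUnion.1 (hA_univ ▸ mem_univ x)
    obtain ⟨m', hm'⟩ := mem_iUnion.1 (hA_univ ▸ mem_univ x')
    obtain ⟨n, hmn, hmn'⟩ := hA m m'
    have hfx : f n ⟨x, hmn hm⟩ = f n ⟨x', hmn' hm'⟩ := Subtype.ext (by rwa [← hF, ← hF])
    exact congrArg Subtype.val ((f n).injective hfx)
  · obtain ⟨n, hn⟩ := mem_iUnion.1 (hB_univ ▸ mem_univ y)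
    exact ⟨(f n).symm ⟨y, hn⟩, by rw [hF, Equiv.apply_symm_apply]⟩

theorem exists_homeomorph_of_directed_iUnion [TopologicalSpace X] [TopologicalSpace Y]
    (hA : Directed (· ⊆ ·) A) (hA_univ : ⋃ n, A n = univ) (hB_univ : ⋃ n, B n = univ)
    (hA_coherent : IsCoherentWith (range A)) (hB_coherent : IsCoherentWith (range B))
    (f : ∀ n, A n ≃ₜ B n)
    (hf : ∀ m n (x : X) (hm : x ∈ A m) (hn : x ∈ A n), (f m ⟨x, hm⟩ : Y) = f n ⟨x, hn⟩) :
    ∃ e : X ≃ₜ Y, ∀ n (x : A n), e x = f n x := by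
  obtain ⟨e, he⟩ := exists_equiv_of_directed_iUnion hA hA_univ hB_univ (fun n => (f n).toEquiv) hf
  refine ⟨e.toHomeomorph fun U => ?_, he⟩
  rw [hA_coherent.isOpen_iff, hB_coherent.isOpen_iff, forall_mem_range, forall_mem_range]
  refine forall_congr' fun n => ?_
  have hpre : (Subtype.val ⁻¹' (e ⁻¹' U) : Set (A n)) = f n ⁻¹' (Subtype.val ⁻¹' U) := by
    ext x
    exact iff_of_eq (congrArg (· ∈ U) (he n x))
  rw [hpre, (f n).isOpen_preimage]

end Gluing

namespace IsOmegaCantor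

variable {X X' : Type*} [TopologicalSpace X] [TopologicalSpace X']
  {Xn : ℕ → Set X} {Xn' : ℕ → Set X'}

theorem isCantorSpace (h : IsOmegaCantor X Xn) (n : ℕ) : IsCantorSpace (Xn n) :=
  h.2.2.2.1 n

theorem isCoherentWith (h : IsOmegaCantor X Xn) : IsCoherentWith (range Xn) where
  isOpen_of_forall_induced U hU := (h.2.2.1 U).2 fun n => hU _ ⟨n, rfl⟩

theorem isClosedEmbedding_inclusion (h : IsOmegaCantor X Xn) (n : ℕ) :
    IsClosedEmbedding (inclusion (h.1 n.le_succ)) := by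
  obtain ⟨-, _, -, -, -⟩ := h.isCantorSpace n
  obtain ⟨-, -, _, -, -⟩ := h.isCantorSpace (n + 1)
  exact (continuous_inclusion _).isClosedEmbedding (inclusion_injective _)

theorem interior_range_inclusion (h : IsOmegaCantor X Xn) (n : ℕ) :
    interior (range (inclusion (h.1 n.le_succ))) = ∅ := by
  obtain ⟨-, -, -, -, -, hint⟩ := h
  rw [range_inclusion]
  exact hint n

theorem exists_homeomorph_succ_extending (h : IsOmegaCantor X Xn) (h' : IsOmegaCantor X' Xn')
    {n : ℕ} (f : Xn n ≃ₜ Xn' n) :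
    ∃ g : Xn (n + 1) ≃ₜ Xn' (n + 1), ∀ x (hx : x ∈ Xn n) (hx' : x ∈ Xn (n + 1)),
      (g ⟨x, hx'⟩ : X') = f ⟨x, hx⟩ := by
  obtain ⟨g, hg⟩ := (h.isCantorSpace (n + 1)).exists_homeomorph_extending
    (h'.isCantorSpace (n + 1)) (h.isClosedEmbedding_inclusion n)
    ((h'.isClosedEmbedding_inclusion n).comp f.isClosedEmbedding) (h.interior_range_inclusion n)
    (by rw [f.surjective.range_comp, h'.interior_range_inclusion n])
  exact ⟨g, fun x hx _ => congrArg Subtype.val (hg ⟨x, hx⟩)⟩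

theorem exists_compatible_homeomorph (h : IsOmegaCantor X Xn) (h' : IsOmegaCantor X' Xn') :
    ∃ f : ∀ n, Xn n ≃ₜ Xn' n, ∀ m n x (hm : x ∈ Xn m) (hn : x ∈ Xn n),
      (f m ⟨x, hm⟩ : X') = f n ⟨x, hn⟩ := by
  obtain ⟨f₀⟩ := (h.isCantorSpace 0).nonempty_homeomorph (h'.isCantorSpace 0)
  choose next hnext using fun n => h.exists_homeomorph_succ_extending h' (n := n)
  let f : ∀ n, Xn n ≃ₜ Xn' n := Nat.rec f₀ next
  have hf {m n : ℕ} (hmn : m ≤ n) (x) (hm : x ∈ Xn m) (hn : x ∈ Xn n) :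
      (f n ⟨x, hn⟩ : X') = f m ⟨x, hm⟩ := by
    induction n, hmn using Nat.le_induction with
    | base => rfl
    | succ n hmn ih => exact (hnext n (f n) x (h.1 hmn hm) hn).trans (ih _)
  refine ⟨f, fun m n x hm hn => ?_⟩
  obtain hmn | hnm := le_total m n
  · exact (hf hmn x hm hn).symm
  · exact hf hnm x hn hm

end IsOmegaCantor

theorem stmt2 {X X' : Type*} [TopologicalSpace X] [TopologicalSpace X']
    (Xn : ℕ → Set X) (Xn' : ℕ → Set X')
    (h : IsOmegaCantor X Xn) (h' : IsOmegaCantor X' Xn') :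
    Nonempty (X ≃ₜ X') := by
  obtain ⟨f, hf⟩ := h.exists_compatible_homeomorph h'
  obtain ⟨e, -⟩ := exists_homeomorph_of_directed_iUnion h.1.directed_le h.2.1 h'.2.1
    h.isCoherentWith h'.isCoherentWith f hf
  exact ⟨e⟩
end

section
/- Let X be a topological space and let K₁ ⊆ K₂ ⊆ ⋯ be an increasing sequence of subsets of X with X = ⋃ₙ Kₙ, such that X carries the direct limit topology (a set U ⊆ X is open if and only if U ∩ Kₙ is open in the subspace topology of Kₙ for every n). If each Kₙ, with the subspace topology, is compact, metrizable, and totally disconnected, then X is totally disconnected; moreover, any two distinct points of X are separated by a set that is clopen in X. -/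
open Set Filter Topology

/-!
Disjoint closed subsets of a profinite space are separated by a clopen set, so a continuous
two-valued function on a compact subspace of a profinite space extends to the whole space. Given two
points of `K n`, take such a function on `K n` that distinguishes them and extend it successively to
`K (n + 1)`, `K (n + 2)`, …. The extensions glue to a function on `X`, which is continuous because
`X` has the direct limit topology, and its fibres are clopen sets separating the two points.
-/

section Extension

variable {X Y : Type*} [TopologicalSpace X] [TopologicalSpace Y]

lemma isCoherentWith_range_add {K : ℕ → Set X} (hmono : Monotone K)
    (hK : IsCoherentWith (range K)) (N : ℕ) : IsCoherentWith (range fun k ↦ K (N + k)) :=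
  hK.enlarge <| forall_mem_range.2 fun n ↦
    ⟨K (N + n), mem_range_self n, hmono (Nat.le_add_left n N)⟩

lemma exists_continuous_eqOn_of_eqOn_inter {ι : Type*} {K : ι → Set X}
    (hunion : ⋃ i, K i = univ) (hK : IsCoherentWith (range K)) {F : ι → X → Y}
    (hF : ∀ i, ContinuousOn (F i) (K i)) (hcompat : ∀ i j, EqOn (F i) (F j) (K i ∩ K j)) :
    ∃ g : X → Y, Continuous g ∧ ∀ i, EqOn g (F i) (K i) := by
  choose i hi using iUnion_eq_univ_iff.1 hunion
  have heq : ∀ j, EqOn (fun x ↦ F (i x) x) (F j) (K j) := fun j x hx ↦ hcompat (i x) j ⟨hi x, hx⟩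
  exact ⟨_, hK.continuous_iff.2 <| forall_mem_range.2 fun j ↦ (hF j).congr (heq j), heq⟩

lemma eqOn_of_eqOn_succ {α β : Type*} {K : ℕ → Set α} (hmono : Monotone K) {F : ℕ → α → β}
    (hF : ∀ n, EqOn (F (n + 1)) (F n) (K n)) {m n : ℕ} (hmn : m ≤ n) :
    EqOn (F n) (F m) (K m) := by
  induction n, hmn using Nat.le_induction with
  | base => exact eqOn_refl _ _
  | succ n hmn ih => exact ((hF n).mono (hmono hmn)).trans ih

lemma exists_continuous_eqOn_of_eqOn_succ {K : ℕ → Set X} (hmono : Monotone K)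
    (hunion : ⋃ n, K n = univ) (hK : IsCoherentWith (range K)) {F : ℕ → X → Y}
    (hF : ∀ n, ContinuousOn (F n) (K n)) (hsucc : ∀ n, EqOn (F (n + 1)) (F n) (K n)) :
    ∃ g : X → Y, Continuous g ∧ ∀ n, EqOn g (F n) (K n) := by
  refine exists_continuous_eqOn_of_eqOn_inter hunion hK hF fun m n x hx ↦ ?_
  rcases le_total m n with hmn | hnm
  · exact (eqOn_of_eqOn_succ hmono hsucc hmn hx.1).symm
  · exact eqOn_of_eqOn_succ hmono hsucc hnm hx.2

lemma exists_continuous_eqOn_of_forall_extend_succ {K : ℕ → Set X} (hmono : Monotone K)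
    (hunion : ⋃ n, K n = univ) (hK : IsCoherentWith (range K))
    (hextend : ∀ n (f : X → Y), ContinuousOn f (K n) →
      ∃ g : X → Y, ContinuousOn g (K (n + 1)) ∧ EqOn g f (K n))
    {N : ℕ} {f : X → Y} (hf : ContinuousOn f (K N)) :
    ∃ g : X → Y, Continuous g ∧ EqOn g f (K N) := by
  have : Nonempty (X → Y) := ⟨f⟩
  choose! E hE_cont hE_eq using hextend
  let F : ℕ → X → Y := fun k ↦ Nat.rec f (fun k g ↦ E (N + k) g) k
  have hF : ∀ k, ContinuousOn (F k) (K (N + k)) := fun k ↦ by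
    induction k with
    | zero => exact hf
    | succ k ih => exact hE_cont (N + k) (F k) ih
  have hmono_add : Monotone fun k ↦ K (N + k) := fun _ _ h ↦ hmono (Nat.add_le_add_left h N)
  have hunion_add : ⋃ k, K (N + k) = univ :=
    univ_subset_iff.1 <| hunion ▸ iUnion_mono fun k ↦ hmono (Nat.le_add_left k N)
  obtain ⟨g, hg, hgF⟩ := exists_continuous_eqOn_of_eqOn_succ hmono_add hunion_add
    (isCoherentWith_range_add hmono hK N) hF fun k ↦ hE_eq (N + k) (F k) (hF k)
  exact ⟨g, hg, hgF 0⟩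

lemma exists_continuousOn_eqOn_of_finite [Finite Y] [T2Space Y] {K L : Set X}
    (hKL : K ⊆ L) [CompactSpace K] [CompactSpace L] [T2Space L] [TotallyDisconnectedSpace L]
    {f : X → Y} (hf : ContinuousOn f K) :
    ∃ g : X → Y, ContinuousOn g L ∧ EqOn g f K := by
  rcases isEmpty_or_nonempty X with _ | ⟨⟨x₀⟩⟩
  · exact ⟨f, (continuous_of_const isEmptyElim).continuousOn, eqOn_refl f K⟩
  -- Over a one-point base the lifting problem is an extension problem.
  obtain ⟨k, hk, -, hkf⟩ := Profinite.exists_lift_of_finite_of_injective_of_surjective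
    (inclusion hKL) (continuous_inclusion hKL) (inclusion_injective hKL)
    (fun _ : Y ↦ ()) (fun _ ↦ ⟨f x₀, rfl⟩) (K.domRestrict f) hf.domRestrict
    (fun _ ↦ ()) continuous_const rfl
  have hg : L.domRestrict (Function.extend Subtype.val k f) = k :=
    Function.extend_comp Subtype.val_injective k f
  refine ⟨Function.extend Subtype.val k f, ?_, fun x hx ↦ ?_⟩
  · rwa [continuousOn_iff_continuous_domRestrict, hg]
  · exact (congrFun hg ⟨x, hKL hx⟩).trans (congrFun hkf ⟨x, hx⟩)

end Extension

lemma exists_continuousOn_bool_ne {X : Type*} [TopologicalSpace X] {K : Set X}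
    [TotallySeparatedSpace K] {x y : X} (hx : x ∈ K) (hy : y ∈ K) (hxy : x ≠ y) :
    ∃ f : X → Bool, ContinuousOn f K ∧ f x ≠ f y := by
  obtain ⟨C, hC, hxC, hyC⟩ := exists_isClopen_of_totally_separated
    (Subtype.coe_ne_coe.1 hxy : (⟨x, hx⟩ : K) ≠ ⟨y, hy⟩)
  refine ⟨(Subtype.val '' C).boolIndicator, ?_, ?_⟩
  · rwa [continuousOn_boolIndicator_iff_isClopen, preimage_image_eq _ Subtype.val_injective]
  · have hx' : x ∈ Subtype.val '' C := ⟨_, hxC, rfl⟩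
    have hy' : y ∉ Subtype.val '' C := by simpa [hy] using hyC
    rw [(mem_iff_boolIndicator _ _).1 hx', (notMem_iff_boolIndicator _ _).1 hy']
    decide

lemma totallySeparatedSpace_of_forall_exists_bool_ne {X : Type*} [TopologicalSpace X]
    (h : ∀ x y : X, x ≠ y → ∃ f : X → Bool, Continuous f ∧ f x ≠ f y) :
    TotallySeparatedSpace X :=
  totallySeparatedSpace_iff_exists_isClopen.2 fun x y hxy ↦
    let ⟨f, hf, hfxy⟩ := h x y hxy
    ⟨f ⁻¹' {f x}, (isClopen_discrete _).preimage hf, rfl, hfxy.symm⟩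

theorem totallySeparatedSpace_of_isCoherentWith_range {X : Type*} [TopologicalSpace X]
    {K : ℕ → Set X} (hmono : Monotone K) (hunion : ⋃ n, K n = univ)
    (hK : IsCoherentWith (range K)) [∀ n, CompactSpace (K n)] [∀ n, T2Space (K n)]
    [∀ n, TotallyDisconnectedSpace (K n)] : TotallySeparatedSpace X := by
  refine totallySeparatedSpace_of_forall_exists_bool_ne fun x y hxy ↦ ?_
  obtain ⟨m, hm⟩ := iUnion_eq_univ_iff.1 hunion x
  obtain ⟨n, hn⟩ := iUnion_eq_univ_iff.1 hunion y
  have hx : x ∈ K (max m n) := hmono (le_max_left m n) hm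
  have hy : y ∈ K (max m n) := hmono (le_max_right m n) hn
  obtain ⟨f, hf, hfxy⟩ := exists_continuousOn_bool_ne hx hy hxy
  obtain ⟨g, hg, hgf⟩ := exists_continuous_eqOn_of_forall_extend_succ hmono hunion hK
    (fun k _ ↦ exists_continuousOn_eqOn_of_finite (hmono k.le_succ)) hf
  exact ⟨g, hg, by rwa [hgf hx, hgf hy]⟩

theorem stmt4_general {X : Type*} [TopologicalSpace X]
    (K : ℕ → Set X) (hmono : Monotone K) (hunion : (⋃ n, K n) = Set.univ)
    (htop : ∀ U : Set X, IsOpen U ↔ ∀ n, IsOpen (Subtype.val ⁻¹' U : Set ↥(K n)))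
    (hcompact : ∀ n, CompactSpace ↥(K n))
    (hT2 : ∀ n, T2Space ↥(K n))
    (htd : ∀ n, TotallyDisconnectedSpace ↥(K n)) :
    TotallyDisconnectedSpace X ∧
      ∀ x y : X, x ≠ y → ∃ A : Set X, IsClopen A ∧ x ∈ A ∧ y ∉ A := by
  have hK : IsCoherentWith (range K) := ⟨fun U hU ↦ (htop U).2 fun n ↦ hU _ (mem_range_self n)⟩
  have : TotallySeparatedSpace X := totallySeparatedSpace_of_isCoherentWith_range hmono hunion hK
  exact ⟨inferInstance, fun _ _ hxy ↦ exists_isClopen_of_totally_separated hxy⟩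

theorem stmt4 {X : Type*} [TopologicalSpace X]
    (K : ℕ → Set X) (hmono : Monotone K) (hunion : (⋃ n, K n) = Set.univ)
    (htop : ∀ U : Set X, IsOpen U ↔ ∀ n, IsOpen (Subtype.val ⁻¹' U : Set ↥(K n)))
    (hcompact : ∀ n, CompactSpace ↥(K n))
    (hmetr : ∀ n, TopologicalSpace.MetrizableSpace ↥(K n))
    (htd : ∀ n, TotallyDisconnectedSpace ↥(K n)) :
    TotallyDisconnectedSpace X ∧
      ∀ x y : X, x ≠ y → ∃ A : Set X, IsClopen A ∧ x ∈ A ∧ y ∉ A :=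
  stmt4_general K hmono hunion htop hcompact (fun _ ↦ inferInstance) htd
end

section
/- Let Z be a metric space, let γ : I → Z be a geodesic (an isometric embedding of a real interval I), let f : (0,∞) → (0,∞), let K ≥ 1 and C ≥ 0 be real numbers, and let R > 0 satisfy f(R) ≥ K² + K. Suppose that every continuous path β : [c,d] → Z whose endpoints β(c), β(d) lie at distance at most R from the image of γ and whose interior points β(t), for t ∈ (c,d), lie at distance at least R from the image of γ, satisfies ℓ(β) ≥ f(R)·d(β(c), β(d)) − f(R). Then every (K,C)-quasi-geodesic path α : [a,b] → Z with α(a) and α(b) on the image of γ is contained in the closed (R + D)-neighborhood of the image of γ, where D = K·C·f(R) + K·f(R) + K·C + C. -/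
open Set Metric Filter Topology ENNReal

/-- The length (total variation) of a path `α` over the interval `[a, b]`. -/
noncomputable def pathLength {Z : Type*} [MetricSpace Z] (α : ℝ → Z) (a b : ℝ) : ℝ≥0∞ :=
  eVariationOn α (Set.Icc a b)

/-- `α` is a `(K, C)`-quasi-geodesic path on `[a, b]`: it is continuous and for all
`a ≤ t ≤ u ≤ b`, the length of `α` over `[t, u]` is at most `K (u - t) + C` and
`d(α(t), α(u)) ≥ (u - t)/K - C`. -/
def IsQuasiGeodesicOn {Z : Type*} [MetricSpace Z] (K C : ℝ) (α : ℝ → Z) (a b : ℝ) : Prop :=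
  ContinuousOn α (Set.Icc a b) ∧
  ∀ t u : ℝ, a ≤ t → t ≤ u → u ≤ b →
    pathLength α t u ≤ ENNReal.ofReal (K * (u - t) + C) ∧
    (u - t) / K - C ≤ dist (α t) (α u)

/-- `γ` is a geodesic on the interval `I`: `I` is a real interval (order-connected set) and
`γ` is an isometric embedding of `I`. -/
def IsGeodesicOn {Z : Type*} [MetricSpace Z] (γ : ℝ → Z) (I : Set ℝ) : Prop :=
  I.OrdConnected ∧ ∀ t ∈ I, ∀ u ∈ I, dist (γ t) (γ u) = |t - u|

/-! Around a time `t` at which the path `α` is far from the geodesic, let `[c, d]` be the interval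
between the last time before `t` and the first time after `t` at which `α` is within `R` of it.
On `[c, d]` the detour bound gives `f(R) ((d - c) / K - C) - f(R) ≤ ℓ ≤ K (d - c) + C` for the
length `ℓ` of the excursion. Since `f(R) ≥ K² + K`, the coefficient of `d - c` on the left exceeds
the one on the right by at least `1`. This bounds `d - c`, hence `ℓ`, hence `d(α c, α t)`, while
`α c` is within `R` of the geodesic. The distance to the geodesic is a `1`-Lipschitz function, and
the estimate holds for the sublevel sets of any such function `g`. -/

section Excursion

variable {X Y : Type*} [LinearOrder X] [TopologicalSpace X] [OrderClosedTopology X]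
  [CompactIccSpace X] {a b t : X}

lemma exists_Ioo_subset_compl_of_isClosed {A : Set X} (hA : IsClosed A) (ha : a ∈ A) (hb : b ∈ A)
    (ht : t ∈ Icc a b) : ∃ c ∈ A ∩ Icc a t, ∃ d ∈ A ∩ Icc t b, Ioo c d ⊆ Aᶜ := by
  obtain ⟨c, hc, hc_max⟩ := (isCompact_Icc.inter_left hA).exists_isGreatest
    ⟨a, ha, left_mem_Icc.2 ht.1⟩
  obtain ⟨d, hd, hd_min⟩ := (isCompact_Icc.inter_left hA).exists_isLeast
    ⟨b, hb, right_mem_Icc.2 ht.2⟩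
  refine ⟨c, hc, d, hd, fun s hs hsA => ?_⟩
  rcases le_total s t with hst | hts
  · exact hs.1.not_ge (hc_max ⟨hsA, hc.2.1.trans hs.1.le, hst⟩)
  · exact hs.2.not_ge (hd_min ⟨hsA, hts, hs.2.le.trans hd.2.2⟩)

lemma exists_excursion_of_continuousOn [LinearOrder Y] [TopologicalSpace Y] [ClosedIicTopology Y]
    {g : X → Y} {r : Y} (hg : ContinuousOn g (Icc a b)) (ha : g a ≤ r) (hb : g b ≤ r)
    (ht : t ∈ Icc a b) :
    ∃ c ∈ Icc a t, ∃ d ∈ Icc t b, g c ≤ r ∧ g d ≤ r ∧ ∀ s ∈ Ioo c d, r < g s := by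
  have hclosed : IsClosed (Icc a b ∩ g ⁻¹' Iic r) :=
    hg.preimage_isClosed_of_isClosed isClosed_Icc isClosed_Iic
  have hab : a ≤ b := ht.1.trans ht.2
  obtain ⟨c, ⟨⟨-, hgc⟩, hc⟩, d, ⟨⟨-, hgd⟩, hd⟩, hgap⟩ := exists_Ioo_subset_compl_of_isClosed hclosed
    ⟨left_mem_Icc.2 hab, ha⟩ ⟨right_mem_Icc.2 hab, hb⟩ ht
  exact ⟨c, hc, d, hd, hgc, hgd, fun s hs =>
    lt_of_not_ge fun hgs => hgap hs ⟨⟨hc.1.trans hs.1.le, hs.2.le.trans hd.2⟩, hgs⟩⟩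

end Excursion

namespace IsQuasiGeodesicOn

variable {Z : Type*} [MetricSpace Z] {K C a b : ℝ} {α : ℝ → Z}

lemma mono (h : IsQuasiGeodesicOn K C α a b) {c d : ℝ} (hac : a ≤ c) (hdb : d ≤ b) :
    IsQuasiGeodesicOn K C α c d :=
  ⟨h.1.mono (Icc_subset_Icc hac hdb),
    fun t u hct htu hud => h.2 t u (hac.trans hct) htu (hud.trans hdb)⟩

lemma const_nonneg (h : IsQuasiGeodesicOn K C α a b) (hab : a ≤ b) : 0 ≤ C := by
  simpa using (h.2 a a le_rfl le_rfl hab).2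

lemma mul_sub_add_nonneg (h : IsQuasiGeodesicOn K C α a b) (hK : 0 ≤ K) (hab : a ≤ b) :
    0 ≤ K * (b - a) + C :=
  add_nonneg (mul_nonneg hK (sub_nonneg.2 hab)) (h.const_nonneg hab)

lemma dist_le (h : IsQuasiGeodesicOn K C α a b) (hK : 0 ≤ K) {s t : ℝ} (hs : s ∈ Icc a b)
    (ht : t ∈ Icc a b) : dist (α s) (α t) ≤ K * (b - a) + C := by
  have hab : a ≤ b := hs.1.trans hs.2
  rw [← edist_le_ofReal (h.mul_sub_add_nonneg hK hab)]
  calc edist (α s) (α t) ≤ pathLength α a b := eVariationOn.edist_le α hs ht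
    _ ≤ ENNReal.ofReal (K * (b - a) + C) := (h.2 a b le_rfl hab le_rfl).1

lemma sub_le_of_le_pathLength (h : IsQuasiGeodesicOn K C α a b) (hK : 0 < K) (hab : a ≤ b)
    {F E : ℝ} (hF : K ^ 2 + K ≤ F)
    (hlen : ENNReal.ofReal (F * dist (α a) (α b) - E) ≤ pathLength α a b) :
    b - a ≤ F * C + E + C := by
  obtain ⟨hupper, hlower⟩ := h.2 a b le_rfl hab le_rfl
  have hF0 : 0 ≤ F := le_trans (by positivity) hF
  have hdist : F * dist (α a) (α b) - E ≤ K * (b - a) + C :=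
    (ENNReal.ofReal_le_ofReal_iff (h.mul_sub_add_nonneg hK.le hab)).1 (hlen.trans hupper)
  have hslope : K * (b - a) + (b - a) ≤ F * ((b - a) / K) :=
    calc K * (b - a) + (b - a) = (K ^ 2 + K) * ((b - a) / K) := by field_simp
      _ ≤ F * ((b - a) / K) :=
        mul_le_mul_of_nonneg_right hF (div_nonneg (sub_nonneg.2 hab) hK.le)
  have hmul : F * ((b - a) / K - C) ≤ F * dist (α a) (α b) := by gcongr
  linarith

end IsQuasiGeodesicOn

theorem stmt10_general {Z : Type*} [MetricSpace Z] {g : Z → ℝ} (hg : LipschitzWith 1 g)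
    {K C R F E : ℝ} (hK : 0 < K) (hF : K ^ 2 + K ≤ F)
    (hdetour : ∀ (c d : ℝ) (β : ℝ → Z), c ≤ d → ContinuousOn β (Icc c d) →
      g (β c) ≤ R → g (β d) ≤ R → (∀ t ∈ Ioo c d, R ≤ g (β t)) →
      ENNReal.ofReal (F * dist (β c) (β d) - E) ≤ pathLength β c d)
    {a b : ℝ} {α : ℝ → Z} (hα : IsQuasiGeodesicOn K C α a b) (ha : g (α a) ≤ R)
    (hb : g (α b) ≤ R) {t : ℝ} (ht : t ∈ Icc a b) :
    g (α t) ≤ R + (K * C * F + K * E + K * C + C) := by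
  obtain ⟨c, hc, d, hd, hgc, hgd, hfar⟩ :=
    exists_excursion_of_continuousOn (hg.continuous.comp_continuousOn hα.1) ha hb ht
  have hcd : c ≤ d := hc.2.trans hd.1
  have hα' : IsQuasiGeodesicOn K C α c d := hα.mono hc.1 hd.2
  have hdur : d - c ≤ F * C + E + C := hα'.sub_le_of_le_pathLength hK hcd hF
    (hdetour c d α hcd hα'.1 hgc hgd fun s hs => (hfar s hs).le)
  calc g (α t) ≤ g (α c) + dist (α t) (α c) := by simpa using hg.le_add_mul (α t) (α c)
    _ ≤ R + (K * (d - c) + C) :=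
      add_le_add hgc (hα'.dist_le hK.le ⟨hc.2, hd.1⟩ (left_mem_Icc.2 hcd))
    _ ≤ R + (K * (F * C + E + C) + C) := by gcongr
    _ = R + (K * C * F + K * E + K * C + C) := by ring

theorem stmt10 {Z : Type*} [MetricSpace Z] (γ : ℝ → Z) (I : Set ℝ)
    (hγ : IsGeodesicOn γ I) (f : ℝ → ℝ) (K C R : ℝ)
    (hK : 1 ≤ K) (hC : 0 ≤ C) (hR : 0 < R) (hfR : K ^ 2 + K ≤ f R)
    (hdetour : ∀ (c d : ℝ) (β : ℝ → Z), c ≤ d → ContinuousOn β (Set.Icc c d) →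
      Metric.infDist (β c) (γ '' I) ≤ R → Metric.infDist (β d) (γ '' I) ≤ R →
      (∀ t ∈ Set.Ioo c d, R ≤ Metric.infDist (β t) (γ '' I)) →
      ENNReal.ofReal (f R * dist (β c) (β d) - f R) ≤ pathLength β c d) :
    ∀ (a b : ℝ) (α : ℝ → Z), a ≤ b → IsQuasiGeodesicOn K C α a b →
      α a ∈ γ '' I → α b ∈ γ '' I →
      ∀ t ∈ Set.Icc a b,
        Metric.infDist (α t) (γ '' I) ≤ R + (K * C * f R + K * f R + K * C + C) :=
  fun _ _ _ _ hα ha hb _ ht =>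
    stmt10_general (lipschitz_infDist_pt (γ '' I)) (one_pos.trans_le hK) hfR hdetour hα
      ((infDist_zero_of_mem ha).trans_le hR.le) ((infDist_zero_of_mem hb).trans_le hR.le) ht
end
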